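/- Let k be a non-negative integer and let G be a connected K_{1,4}-free simple graph of order n. If every independent set of k+3 vertices in G has degree sum at least n−k, then G has a spanning tree T with |L(T)| + |B(T)| ≤ 2k+3, i.e., with at most 2k+3 leaves and branch vertices in total. -/

import Mathlib

open SimpleGraph Finset List

open scoped Classical

variable {V : Type*}

/-- `G` contains no induced copy of `K_{1,4}` (a star with four edges). -/
def K14Free (G : SimpleGraph V) : Prop :=
  ¬ ∃ c a b d e : V, a ≠ b ∧ a ≠ d ∧ a ≠ e ∧ b ≠ d ∧ b ≠ e ∧ d ≠ e ∧
    G.Adj c a ∧ G.Adj c b ∧ G.Adj c d ∧ G.Adj c e ∧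
    ¬G.Adj a b ∧ ¬G.Adj a d ∧ ¬G.Adj a e ∧ ¬G.Adj b d ∧ ¬G.Adj b e ∧ ¬G.Adj d e

/-- `s` is an independent set of vertices of `G`. -/
def IsIndepFinset (G : SimpleGraph V) (s : Finset V) : Prop :=
  ∀ u ∈ s, ∀ v ∈ s, u ≠ v → ¬G.Adj u v

/-- The set `L(T)` of leaves (vertices of degree one) of `T`. -/
noncomputable def leafSet [Fintype V] (T : SimpleGraph V) : Finset V :=
  Finset.univ.filter fun v => T.degree v = 1

/-- The set `B(T)` of branch vertices (vertices of degree at least three) of `T`. -/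
noncomputable def branchSet [Fintype V] (T : SimpleGraph V) : Finset V :=
  Finset.univ.filter fun v => 3 ≤ T.degree v

/-- `v` is an oblique neighbor of the edge `e` with respect to the (spanning) tree `T` of `G`:
`e = s(a,b)` where `b` is the endpoint of `e` farthest from `v` in `T`, and `v b ∈ E(G)`. -/
def IsObliqueNbr (G T : SimpleGraph V) (e : Sym2 V) (v : V) : Prop :=
  ∃ a b : V, e = s(a, b) ∧ T.dist v a < T.dist v b ∧ G.Adj v b

/-- The number of vertices of the reducible stem `R_Stem(T)` of `T`: a vertex `v` survives
iff for every leaf `x` of `T` the (unique) path of `T` from `x` to `v` contains a branch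
vertex (so exactly the vertices not lying strictly before the first branch vertex on the
path leaving some leaf). -/
noncomputable def rstemCard [Fintype V] (T : SimpleGraph V) : ℕ :=
  {v : V | ∀ x : V, T.degree x = 1 → ∀ p : T.Walk x v, p.IsPath →
    ∃ w ∈ p.support, 3 ≤ T.degree w}.ncard

/-!
Take a spanning tree of `G` with the fewest leaves. If it has no branch vertex it has at most two
leaves; otherwise let `r` be a branch vertex of it, and let `T` be the tree whose leaves are, in
total, farthest from `r`, among the spanning trees with the fewest leaves and branch vertex `r`.

The minimality of `|L(T)|` makes the leaves independent in `G` and, since `G` is `K_{1,4}`-free,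
shows that different pairs of a leaf `u` and a `G`-neighbor `x` of `u` give different first edges
of the path of `T` from `x` to `u`. The choice of `T` with deepest leaves shows, again with
`K_{1,4}`-freeness, that the endpoint of this edge farther from `r` is not a branch vertex. Hence
the pairs inject into the complement of `B(T)`, so that the degree sum of the leaves is at most
`n - |B(T)|`. As `|B(T)| + 2 ≤ |L(T)|`, if `|L(T)| + |B(T)|` were larger than `2k + 3` there would
be `k + 3` leaves, and their degree sum would be at most
`n - |B(T)| - (|L(T)| - k - 3) < n - k`.
-/

section Connected

variable {G : SimpleGraph V}

theorem connected_induction (hG : G.Connected) {P : V → Prop} {a : V} (ha : P a)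
    (step : ∀ ⦃v w⦄, G.Adj v w → P v → P w) (v : V) : P v := by
  induction (reachable_iff_reflTransGen a v).1 (hG a v) with
  | refl => exact ha
  | tail _ hvw ih => exact step hvw ih

theorem le_add_dist_of_forall_adj (hG : G.Connected) {f : V → ℕ}
    (hf : ∀ ⦃v w⦄, G.Adj v w → f w ≤ f v + 1) (r v : V) : f v ≤ f r + G.dist r v := by
  obtain ⟨p, hp⟩ := hG.exists_walk_length_eq_dist r v
  rw [← hp]
  clear hp
  induction p with
  | nil => exact le_self_add
  | cons hvw p ih =>
    rw [Walk.length_cons]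
    have := hf hvw
    omega

theorem dist_le_dist_add_one_of_adj {v w : V} (hvw : G.Adj v w) (r : V) :
    G.dist r w ≤ G.dist r v + 1 := by
  have := hvw.diff_dist_adj (u := r)
  omega

end Connected

section Degree

variable [Fintype V] {T : SimpleGraph V} {v a b c : V}

theorem eq_of_adj_of_degree_eq_one (hv : T.degree v = 1) (ha : T.Adj v a) (hb : T.Adj v b) :
    a = b :=
  (degree_eq_one_iff_existsUnique_adj.1 hv).unique ha hb

theorem three_le_degree_of_adj (ha : T.Adj v a) (hb : T.Adj v b) (hc : T.Adj v c) (hab : a ≠ b)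
    (hac : a ≠ c) (hbc : b ≠ c) : 3 ≤ T.degree v := by
  rw [← card_neighborFinset_eq_degree]
  simp only [← mem_neighborFinset] at ha hb hc
  exact Finset.two_lt_card.2 ⟨a, ha, b, hb, c, hc, hab, hac, hbc⟩

end Degree

/-! ### Sides of an edge of a tree -/

/-- `S` is the vertex set of the component of `T - xy` that contains `y`, where `xy` is a bridge
of `T`. In a tree, `u ∈ S` says that `y` is the neighbor of `x` on the path from `x` to `u`. -/
structure IsSide (T : SimpleGraph V) (x y : V) (S : Set V) : Prop where
  adj : T.Adj x y
  left_notMem : x ∉ S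
  right_mem : y ∈ S
  eq_of_adj : ∀ ⦃a⦄, a ∈ S → ∀ ⦃b⦄, b ∉ S → T.Adj a b → a = y ∧ b = x

namespace IsSide

variable {T : SimpleGraph V} {x y z v : V} {S R : Set V}

theorem compl (h : IsSide T x y S) : IsSide T y x Sᶜ where
  adj := h.adj.symm
  left_notMem := not_not.2 h.right_mem
  right_mem := h.left_notMem
  eq_of_adj _ ha _ hb hab := (h.eq_of_adj (not_not.1 hb) ha hab.symm).symm

theorem mem_iff_mem (h : IsSide T x y S) {a b : V} (hab : T.Adj a b) (hne : s(a, b) ≠ s(x, y)) :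
    a ∈ S ↔ b ∈ S := by
  have := h.eq_of_adj (a := a) (b := b)
  have := h.eq_of_adj (a := b) (b := a)
  grind [T.adj_comm a b]

theorem right_eq (hT : T.Connected) (hS : IsSide T x y S) (hR : IsSide T x z R) (hvS : v ∈ S)
    (hvR : v ∈ R) : y = z := by
  by_contra hne
  refine hS.left_notMem (connected_induction hT (P := (· ∈ S ∩ R)) ⟨hvS, hvR⟩ ?_ x).1
  intro p q hpq ⟨hpS, hpR⟩
  constructor
  · by_contra hq
    obtain ⟨rfl, rfl⟩ := hS.eq_of_adj hpS hq hpq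
    exact hne (hR.eq_of_adj hpR hR.left_notMem hpq).1
  · by_contra hq
    obtain ⟨rfl, rfl⟩ := hR.eq_of_adj hpR hq hpq
    exact hne (hS.eq_of_adj hpS hS.left_notMem hpq).1.symm

theorem set_eq (hT : T.Connected) (hS : IsSide T x y S) (hR : IsSide T x y R) : S = R := by
  ext w
  refine connected_induction hT (P := fun w => w ∈ S ↔ w ∈ R)
    (iff_of_false hS.left_notMem hR.left_notMem) (fun p q hpq hp => ?_) w
  by_cases hne : s(p, q) = s(x, y)
  · grind [hS.left_notMem, hR.left_notMem, hS.right_mem, hR.right_mem]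
  · rw [← hS.mem_iff_mem hpq hne, ← hR.mem_iff_mem hpq hne, hp]

theorem notMem_of_ne (hT : T.Connected) (hS : IsSide T x y S) (hR : IsSide T x z R) (hne : y ≠ z)
    (hv : v ∈ S) : v ∉ R :=
  fun hvR => hne (right_eq hT hS hR hv hvR)

theorem dist_left (hT : T.Connected) (hS : IsSide T x y S) (hv : v ∈ S) :
    T.dist v x = T.dist v y + 1 := by
  refine le_antisymm (dist_le_dist_add_one_of_adj hS.adj.symm v) ?_
  have key := le_add_dist_of_forall_adj hT (f := fun w => if w ∈ S then T.dist y w + 1 else 0)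
    (fun p q hpq => ?_) x v
  · rw [T.dist_comm (u := v), T.dist_comm (u := v)]
    simpa only [hv, hS.left_notMem, if_true, if_false, zero_add] using key
  · have := dist_le_dist_add_one_of_adj hpq y
    by_cases hp : p ∈ S
    · split_ifs <;> omega
    · by_cases hq : q ∈ S
      · simp [(hS.eq_of_adj hq hp hpq.symm).1, hS.right_mem]
      · simp [hq]

theorem reachable_deleteEdges (hT : T.Connected) (hS : IsSide T x y S) (hv : v ∈ S) :
    (T.deleteEdges {s(x, y)}).Reachable y v := by
  revert hv
  refine connected_induction hT (P := fun v => v ∈ S → (T.deleteEdges {s(x, y)}).Reachable y v)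
    (fun hx => absurd hx hS.left_notMem) (fun p q hpq ih hq => ?_) v
  by_cases hne : s(p, q) = s(x, y)
  · obtain rfl : q = y := by grind [hS.left_notMem]
    rfl
  · exact (ih ((hS.mem_iff_mem hpq hne).2 hq)).trans (deleteEdges_adj.2 ⟨hpq, hne⟩).reachable

theorem mem_of_reachable_deleteEdges (hS : IsSide T x y S) {c d : V} (hc : c ∈ S)
    (hcd : (T.deleteEdges {s(x, y)}).Reachable c d) : d ∈ S := by
  induction (reachable_iff_reflTransGen c d).1 hcd with
  | refl => exact hc
  | tail hcp hpq ih =>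
    rw [deleteEdges_adj] at hpq
    exact (hS.mem_iff_mem hpq.1 hpq.2).1 (ih ((reachable_iff_reflTransGen _ _).2 hcp))

theorem eq_right_of_degree_eq_one [Fintype V] (hT : T.Connected) (hS : IsSide T x y S)
    (hy : T.degree y = 1) (hv : v ∈ S) : v = y := by
  revert hv
  refine connected_induction hT (P := fun v => v ∈ S → v = y)
    (fun hx => absurd hx hS.left_notMem) (fun p q hpq ih hq => ?_) v
  by_cases hp : p ∈ S
  · obtain rfl := ih hp
    exact absurd (eq_of_adj_of_degree_eq_one hy hpq hS.adj.symm ▸ hq) hS.left_notMem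
  · exact (hS.eq_of_adj hq hp hpq.symm).1

end IsSide

section Tree

variable {T : SimpleGraph V} {x y : V}

theorem exists_isSide_of_adj (hT : T.IsAcyclic) (hxy : T.Adj x y) : ∃ S, IsSide T x y S := by
  have hbridge : ¬ (T.deleteEdges {s(x, y)}).Reachable x y :=
    isBridge_iff.1 (isAcyclic_iff_forall_adj_isBridge.1 hT hxy)
  refine ⟨{v | (T.deleteEdges {s(x, y)}).Reachable y v}, hxy, fun h => hbridge h.symm, .rfl, ?_⟩
  intro a ha b hb hab
  have hedge : s(a, b) = s(x, y) := by
    by_contra hne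
    exact hb (Reachable.trans ha (deleteEdges_adj.2 ⟨hab, hne⟩).reachable)
  rcases Sym2.eq_iff.1 hedge with ⟨rfl, rfl⟩ | h
  · exact absurd .rfl hb
  · exact h

theorem exists_isSide_mem (hT : T.IsTree) {u : V} (hxu : x ≠ u) :
    ∃ y S, IsSide T x y S ∧ u ∈ S := by
  suffices h : u = x ∨ ∃ y S, IsSide T x y S ∧ u ∈ S from h.resolve_left hxu.symm
  refine connected_induction hT.connected
    (P := fun v => v = x ∨ ∃ y S, IsSide T x y S ∧ v ∈ S) (.inl rfl) (fun v w hvw hv => ?_) u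
  rcases hv with rfl | ⟨y, S, hS, hv⟩
  · obtain ⟨S, hS⟩ := exists_isSide_of_adj hT.isAcyclic hvw
    exact .inr ⟨w, S, hS, hS.right_mem⟩
  · by_cases hw : w ∈ S
    · exact .inr ⟨y, S, hS, hw⟩
    · exact .inl (hS.eq_of_adj hv hw hvw).2

theorem exists_isSide_ne [Fintype V] (hT : T.IsAcyclic) (hx : 1 < T.degree x) (y : V) :
    ∃ z S, z ≠ y ∧ IsSide T x z S := by
  obtain ⟨z, hz, hzy⟩ := Finset.exists_mem_ne (T.card_neighborFinset_eq_degree x ▸ hx) y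
  obtain ⟨S, hS⟩ := exists_isSide_of_adj hT ((mem_neighborFinset _ _ _).1 hz)
  exact ⟨z, S, hzy, hS⟩

theorem IsSide.exists_degree_eq_one [Fintype V] (hT : T.IsTree) {S : Set V} (hS : IsSide T x y S) :
    ∃ v ∈ S, T.degree v = 1 := by
  induction hn : S.ncard using Nat.strong_induction_on generalizing x y S with
  | _ n ih =>
  by_cases hy : T.degree y = 1
  · exact ⟨y, hS.right_mem, hy⟩
  have hpos := hS.adj.degree_pos_right
  obtain ⟨z, R, hzx, hR⟩ := exists_isSide_ne hT.isAcyclic (by omega : 1 < T.degree y) x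
  have hsub : R ⊆ S := fun v hv => not_not.1 (hR.notMem_of_ne hT.connected hS.compl hzx hv)
  have hlt : R.ncard < S.ncard :=
    Set.ncard_lt_ncard ⟨hsub, fun h => hR.left_notMem (h hS.right_mem)⟩ S.toFinite
  obtain ⟨v, hv, hv1⟩ := ih _ (hn ▸ hlt) hR rfl
  exact ⟨v, hsub hv, hv1⟩

end Tree

/-! ### Exchanging an edge -/

/-- The graph obtained from `T` by replacing the edge `xy` with the edge `dc`. It is used when `S`
is the side of `y` and `dc` also leads into `S`, that is, `d ∉ S` and `c ∈ S`. -/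
def exchange (T : SimpleGraph V) (x y d c : V) : SimpleGraph V :=
  T.deleteEdges {s(x, y)} ⊔ edge d c

section Exchange

variable {G T : SimpleGraph V} {x y c d : V} {S : Set V}

theorem exchange_adj {v w : V} : (exchange T x y d c).Adj v w ↔
    T.Adj v w ∧ s(v, w) ≠ s(x, y) ∨ s(v, w) = s(d, c) ∧ v ≠ w := by
  simp only [exchange, sup_adj, deleteEdges_adj, Set.mem_singleton_iff, edge_adj, Sym2.eq_iff,
    ne_eq]

theorem exchange_le (hT : T ≤ G) (hdc : G.Adj d c) : exchange T x y d c ≤ G :=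
  sup_le ((deleteEdges_le _).trans hT) ((edge_le_iff G).2 (.inr hdc))

theorem IsSide.isTree_exchange (hT : T.IsTree) (hS : IsSide T x y S) (hd : d ∉ S) (hc : c ∈ S) :
    (exchange T x y d c).IsTree := by
  refine ⟨?_, (hT.isAcyclic.anti (deleteEdges_le _)).sup_edge_of_not_reachable
    fun h => hd (hS.mem_of_reachable_deleteEdges hc h.symm)⟩
  have hle : T.deleteEdges {s(x, y)} ≤ exchange T x y d c := le_sup_left
  have hdc : (exchange T x y d c).Adj d c :=
    exchange_adj.2 (.inr ⟨rfl, fun h => hd (h ▸ hc)⟩)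
  have hmem {v : V} (hv : v ∈ S) : (exchange T x y d c).Reachable y v :=
    (hS.reachable_deleteEdges hT.connected hv).mono hle
  have hcompl {v : V} (hv : v ∉ S) : (exchange T x y d c).Reachable x v := by
    have := hS.compl.reachable_deleteEdges hT.connected hv
    rw [Sym2.eq_swap] at this
    exact this.mono hle
  refine connected_iff_exists_forall_reachable _ |>.2 ⟨x, fun v => ?_⟩
  by_cases hv : v ∈ S
  · exact (hcompl hd).trans (hdc.reachable.trans ((hmem hc).symm.trans (hmem hv)))
  · exact hcompl hv

theorem IsSide.degree_exchange [Fintype V] (hS : IsSide T x y S) (hd : d ∉ S) (hc : c ∈ S) (v : V) :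
    (exchange T x y d c).degree v + (if v = x then 1 else 0) + (if v = y then 1 else 0) =
      T.degree v + (if v = d then 1 else 0) + (if v = c then 1 else 0) := by
  have hdeg (H : SimpleGraph V) : H.degree v = ∑ w, if H.Adj v w then 1 else 0 := by
    rw [← card_neighborFinset_eq_degree, neighborFinset_eq_filter, Finset.card_filter]
  have hind (a b : V) : (if v = a then 1 else 0) = ∑ w, if v = a ∧ w = b then 1 else 0 := by
    by_cases hva : v = a <;> simp [hva]
  simp only [hdeg, hind x y, hind y x, hind d c, hind c d, ← Finset.sum_add_distrib]
  refine Finset.sum_congr rfl fun w _ => ?_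
  have := hS.mem_iff_mem (a := v) (b := w)
  rw [exchange_adj]
  split_ifs <;> grind [hS.adj, hS.adj.symm, hS.left_notMem, hS.right_mem, SimpleGraph.irrefl]

theorem IsSide.isSide_exchange {p q : V} {R : Set V} (hR : IsSide T p q R)
    (hdc : d ∈ R ↔ c ∈ R) (hne : s(p, q) ≠ s(x, y)) : IsSide (exchange T x y d c) p q R where
  adj := exchange_adj.2 (.inl ⟨hR.adj, hne⟩)
  left_notMem := hR.left_notMem
  right_mem := hR.right_mem
  eq_of_adj a ha b hb hab := by
    rcases exchange_adj.1 hab with h | h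
    · exact hR.eq_of_adj ha hb h.1
    · grind

theorem le_add_dist_exchange (hT : (exchange T x y d c).Connected) {f : V → ℕ}
    (hf : ∀ ⦃v w⦄, T.Adj v w → s(v, w) ≠ s(x, y) → f w ≤ f v + 1) (hdc : f c ≤ f d + 1)
    (hcd : f d ≤ f c + 1) (r v : V) : f v ≤ f r + (exchange T x y d c).dist r v := by
  refine le_add_dist_of_forall_adj hT (fun v w hvw => ?_) r v
  rcases exchange_adj.1 hvw with ⟨h, hne⟩ | ⟨h, -⟩
  · exact hf h hne
  · rcases Sym2.eq_iff.1 h with ⟨rfl, rfl⟩ | ⟨rfl, rfl⟩ <;> assumption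

end Exchange

section LeafCount

variable [Fintype V] {T : SimpleGraph V} {u v : V}

theorem mem_leafSet : v ∈ leafSet T ↔ T.degree v = 1 := by
  simp only [leafSet, Finset.mem_filter, Finset.mem_univ, true_and]

theorem mem_branchSet : v ∈ branchSet T ↔ 3 ≤ T.degree v := by
  simp only [branchSet, Finset.mem_filter, Finset.mem_univ, true_and]

theorem card_leafSet_eq [Nontrivial V] (hT : T.IsTree) :
    #(leafSet T) = 2 + ∑ v ∈ branchSet T, (T.degree v - 2) := by
  have hsum : ∑ v, T.degree v + 2 = ∑ _v : V, 2 := by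
    rw [T.sum_degrees_eq_twice_card_edges, Finset.sum_const, Finset.card_univ, smul_eq_mul,
      ← hT.card_edgeFinset]
    ring
  have hpoint : ∑ v, (T.degree v + if T.degree v = 1 then 1 else 0) =
      ∑ v, (2 + if 3 ≤ T.degree v then T.degree v - 2 else 0) := by
    refine Finset.sum_congr rfl fun v _ => ?_
    have := hT.connected.preconnected.degree_pos_of_nontrivial v
    split_ifs <;> omega
  rw [Finset.sum_add_distrib, Finset.sum_add_distrib, ← Finset.card_filter,
    ← Finset.sum_filter] at hpoint
  rw [leafSet, branchSet]
  omega

theorem card_branchSet_add_two_le [Nontrivial V] (hT : T.IsTree) :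
    #(branchSet T) + 2 ≤ #(leafSet T) := by
  rw [card_leafSet_eq hT, add_comm, Finset.card_eq_sum_ones]
  gcongr with v hv
  have := mem_branchSet.1 hv
  omega

theorem card_leafSet_le_two (hT : T.IsTree) (hB : branchSet T = ∅) : #(leafSet T) ≤ 2 := by
  cases subsingleton_or_nontrivial V
  · exact (Finset.card_le_one_of_subsingleton _).trans one_le_two
  · rw [card_leafSet_eq hT, hB, Finset.sum_empty, add_zero]

theorem three_le_card_leafSet (hT : T.IsTree) (hv : 3 ≤ T.degree v) : 3 ≤ #(leafSet T) := by
  have : Nontrivial V := nontrivial_of_degree_ne_zero (by omega : T.degree v ≠ 0)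
  have hpos : 0 < #(branchSet T) := Finset.card_pos.2 ⟨v, mem_branchSet.2 hv⟩
  have := card_branchSet_add_two_le hT
  omega

theorem IsSide.exists_isSide_isSide_ne (hT : T.IsAcyclic) {x y : V} {S : Set V}
    (hS : IsSide T x y S) (hx : 3 ≤ T.degree x) :
    ∃ a A b B, IsSide T x a A ∧ IsSide T x b B ∧ a ≠ y ∧ b ≠ y ∧ a ≠ b := by
  have hcard : 1 < #((T.neighborFinset x).erase y) := by
    rw [Finset.card_erase_of_mem ((mem_neighborFinset _ _ _).2 hS.adj),
      card_neighborFinset_eq_degree]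
    omega
  obtain ⟨a, ha, b, hb, hab⟩ := Finset.one_lt_card.1 hcard
  rw [Finset.mem_erase, mem_neighborFinset] at ha hb
  obtain ⟨A, hA⟩ := exists_isSide_of_adj hT ha.2
  obtain ⟨B, hB⟩ := exists_isSide_of_adj hT hb.2
  exact ⟨a, A, b, B, hA, hB, ha.1, hb.1, hab⟩

theorem IsSide.two_le_card_leafSet_notMem (hT : T.IsTree) {x y : V} {S : Set V}
    (hS : IsSide T x y S) (hx : 3 ≤ T.degree x) : 2 ≤ #{w ∈ leafSet T | w ∉ S} := by
  obtain ⟨a, A, b, B, hA, hB, hay, hby, hab⟩ := hS.exists_isSide_isSide_ne hT.isAcyclic hx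
  obtain ⟨u, huA, hu⟩ := hA.exists_degree_eq_one hT
  obtain ⟨v, hvB, hv⟩ := hB.exists_degree_eq_one hT
  have huB := hA.notMem_of_ne hT.connected hB hab huA
  refine Finset.one_lt_card.2 ⟨u, ?_, v, ?_, fun huv => huB (huv ▸ hvB)⟩
  · exact Finset.mem_filter.2 ⟨mem_leafSet.2 hu, hA.notMem_of_ne hT.connected hS hay huA⟩
  · exact Finset.mem_filter.2 ⟨mem_leafSet.2 hv, hB.notMem_of_ne hT.connected hS hby hvB⟩

theorem IsSide.exists_separating_of_degree_le_two (hT : T.IsTree) {w y z : V} {S : Set V}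
    (hS : IsSide T z y S) (hsep : u ∈ S ↔ v ∉ S) (hu : T.degree u = 1) (hv : T.degree v = 1)
    (hz : T.degree z ≤ 2) (hzw : T.Adj z w) : ∃ R, IsSide T w z R ∧ (u ∈ R ↔ v ∉ R) := by
  wlog huS : u ∈ S generalizing u v
  · have hvS : v ∈ S := by tauto
    obtain ⟨R, hR, hsepR⟩ := this (by tauto) hv hu hvS
    exact ⟨R, hR, by tauto⟩
  have hvS : v ∉ S := hsep.1 huS
  by_cases hwy : w = y
  · subst hwy
    exact ⟨Sᶜ, hS.compl, by simp [huS, hvS]⟩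
  have hzv : z ≠ v := by
    rintro rfl
    exact hwy (eq_of_adj_of_degree_eq_one hv hzw hS.adj)
  obtain ⟨c, R, hR, hvR⟩ := exists_isSide_mem hT hzv
  have hcy : c ≠ y := by
    rintro rfl
    exact hvS (hS.set_eq hT.connected hR ▸ hvR)
  obtain rfl : w = c := by
    by_contra hwc
    have := three_le_degree_of_adj hzw hS.adj hR.adj hwy hwc hcy.symm
    omega
  exact ⟨Rᶜ, hR.compl, by simp [hvR, hS.notMem_of_ne hT.connected hR hcy.symm huS]⟩

theorem exists_isSide_separating (hT : T.IsTree) (huv : u ≠ v) (hu : T.degree u = 1)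
    (hv : T.degree v = 1) {b : V} (hb : 3 ≤ T.degree b) :
    ∃ x y S, IsSide T x y S ∧ 3 ≤ T.degree x ∧ (u ∈ S ↔ v ∉ S) := by
  by_contra! hno
  suffices h : ∃ y S, IsSide T b y S ∧ (u ∈ S ↔ v ∉ S) by
    obtain ⟨y, S, hS, hsep⟩ := h
    have := hno b y S hS hb
    tauto
  refine connected_induction hT.connected (a := u)
    (P := fun z => ∃ y S, IsSide T z y S ∧ (u ∈ S ↔ v ∉ S)) ?_ (fun z w hzw => ?_) b
  · obtain ⟨y, S, hS, hvS⟩ := exists_isSide_mem hT huv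
    exact ⟨y, S, hS, by simp [hvS, hS.left_notMem]⟩
  · rintro ⟨y, S, hS, hsep⟩
    have hz : T.degree z ≤ 2 := by
      by_contra hz
      have := hno z y S hS (by omega)
      tauto
    exact ⟨z, hS.exists_separating_of_degree_le_two hT hsep hu hv hz hzw⟩

end LeafCount

/-- The graph obtained from `T` by replacing the edge `xy` with the edge `xu`. It is used when `u`
is a leaf of `T` on the side of `y`, in which case `y` takes over the role of `u` as a leaf. -/
abbrev leafRotation (T : SimpleGraph V) (x y u : V) : SimpleGraph V :=
  exchange T x y x u

theorem IsSide.compl_leafRotation {T : SimpleGraph V} {x y z u : V} {S R : Set V}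
    (hT : T.Connected) (hS : IsSide T x y S) (hu : u ∈ S) (hR : IsSide T x z R)
    (hzy : z ≠ y) : IsSide (leafRotation T x y u) z x Rᶜ :=
  hR.compl.isSide_exchange
    (iff_of_true hR.left_notMem (hS.notMem_of_ne hT hR hzy.symm hu))
    (by grind [hR.adj.ne])

section LeafExchange

variable [Fintype V] {T : SimpleGraph V} {x y u d c z : V} {S R : Set V}

theorem IsSide.leafSet_exchange_subset_insert (hS : IsSide T x y S) (hx : 3 ≤ T.degree x)
    (hd : d ∉ S) (hc : c ∈ S) (hdl : d ∈ leafSet T) (hcl : c ∈ leafSet T) :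
    leafSet (exchange T x y d c) ⊆ insert y (((leafSet T).erase c).erase d) := by
  intro w hw
  have hdeg := hS.degree_exchange hd hc w
  rw [mem_leafSet] at hw hdl hcl
  simp only [Finset.mem_insert, Finset.mem_erase, mem_leafSet]
  grind

theorem IsSide.leafSet_exchange_subset (hS : IsSide T x y S) (hR : IsSide T x z R)
    (hx : 3 ≤ T.degree x) (hz : z ∉ S) : leafSet (exchange T x y z y) ⊆ leafSet T := by
  intro w hw
  have hdeg := hS.degree_exchange hz hS.right_mem w
  have hzpos := hR.adj.degree_pos_right
  rw [mem_leafSet] at hw ⊢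
  grind

theorem IsSide.degree_leafRotation (hS : IsSide T x y S) (hu : u ∈ S) (v : V) :
    (leafRotation T x y u).degree v + (if v = y then 1 else 0) =
      T.degree v + (if v = u then 1 else 0) := by
  have := hS.degree_exchange hS.left_notMem hu v
  rw [leafRotation]
  omega

theorem IsSide.diff_singleton_leafRotation (hS : IsSide T x y S) (huS : u ∈ S)
    (hu : T.degree u = 1) (huy : u ≠ y) {p : V} (hup : T.Adj u p) :
    IsSide (leafRotation T x y u) u p (S \ {u}) where
  adj := exchange_adj.2 (.inl ⟨hup, by grind [hS.left_notMem]⟩)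
  left_notMem := by simp
  right_mem := ⟨by_contra fun hp => huy (hS.eq_of_adj huS hp hup).1, hup.ne.symm⟩
  eq_of_adj a ha b hb hab := by
    rcases exchange_adj.1 hab with ⟨h, hne⟩ | ⟨h, -⟩
    · have hbS : b ∈ S := (hS.mem_iff_mem h hne).1 ha.1
      obtain rfl : b = u := by_contra fun hbu => hb ⟨hbS, hbu⟩
      exact ⟨eq_of_adj_of_degree_eq_one hu h.symm hup, rfl⟩
    · have := hS.left_notMem
      grind

theorem IsSide.leafSet_leafRotation_subset (hS : IsSide T x y S) (huS : u ∈ S)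
    (hu : u ∈ leafSet T) : leafSet (leafRotation T x y u) ⊆ insert y ((leafSet T).erase u) := by
  intro w hw
  have hdeg := hS.degree_leafRotation huS w
  rw [mem_leafSet] at hw hu
  simp only [Finset.mem_insert, Finset.mem_erase, mem_leafSet]
  grind

theorem eq_insert_erase_of_card_le {α : Type*} {A B : Finset α} {a b : α} (ha : a ∈ A)
    (hsub : B ⊆ insert b (A.erase a)) (hcard : #A ≤ #B) :
    B = insert b (A.erase a) ∧ b ∉ A.erase a := by
  have hle : #(insert b (A.erase a)) ≤ #A :=
    (Finset.card_insert_le _ _).trans_eq (Finset.card_erase_add_one ha)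
  refine ⟨Finset.eq_of_subset_of_card_le hsub (hle.trans hcard), fun hb => ?_⟩
  rw [Finset.insert_eq_self.2 hb] at hsub
  have := Finset.card_le_card hsub
  have := Finset.card_erase_add_one ha
  omega

end LeafExchange

/-! ### Spanning trees with the fewest leaves -/

/-- `T` is a spanning tree of `G` with the least possible number of leaves. -/
structure IsMinLeafTree [Fintype V] (G T : SimpleGraph V) : Prop where
  le : T ≤ G
  isTree : T.IsTree
  card_leafSet_le : ∀ ⦃T' : SimpleGraph V⦄, T' ≤ G → T'.IsTree → #(leafSet T) ≤ #(leafSet T')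

theorem exists_isMinLeafTree [Fintype V] {G : SimpleGraph V} (hG : G.Connected) :
    ∃ T, IsMinLeafTree G T := by
  obtain ⟨T, ⟨hle, htree⟩, hmin⟩ := Set.exists_min_image {T : SimpleGraph V | T ≤ G ∧ T.IsTree}
    (fun T => #(leafSet T)) (Set.toFinite _) hG.exists_isTree_le
  exact ⟨T, hle, htree, fun T' hle' htree' => hmin T' ⟨hle', htree'⟩⟩

namespace IsMinLeafTree

variable [Fintype V] {G T : SimpleGraph V} {x y u v w : V} {S R : Set V}

theorem of_card_leafSet_le {T' : SimpleGraph V} (hT : IsMinLeafTree G T) (hle : T' ≤ G)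
    (htree : T'.IsTree) (hcard : #(leafSet T') ≤ #(leafSet T)) : IsMinLeafTree G T' :=
  ⟨hle, htree, fun _ h₁ h₂ => hcard.trans (hT.card_leafSet_le h₁ h₂)⟩

theorem not_adj_of_mem_leafSet (hT : IsMinLeafTree G T) (hcard : 3 ≤ #(leafSet T))
    (hu : u ∈ leafSet T) (hv : v ∈ leafSet T) : ¬ G.Adj u v := by
  intro huv
  -- Adding `uv` and deleting an edge at a branch vertex of the path from `u` to `v` loses a leaf.
  obtain ⟨b, hb⟩ : (branchSet T).Nonempty := by
    by_contra h
    have := card_leafSet_le_two hT.isTree (Finset.not_nonempty_iff_eq_empty.1 h)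
    omega
  obtain ⟨x, y, S, hS, hx, hsep⟩ := exists_isSide_separating hT.isTree huv.ne (mem_leafSet.1 hu)
    (mem_leafSet.1 hv) (mem_branchSet.1 hb)
  wlog huS : u ∈ S generalizing u v
  · exact this hv hu huv.symm (by tauto) (by tauto)
  have hle := hT.card_leafSet_le (exchange_le hT.le huv.symm)
    (hS.isTree_exchange hT.isTree (hsep.1 huS) huS)
  have hsub := Finset.card_le_card
    (hS.leafSet_exchange_subset_insert hx (hsep.1 huS) huS hv hu)
  have := Finset.card_insert_le y (((leafSet T).erase u).erase v)
  have := Finset.card_erase_add_one hu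
  have := Finset.card_erase_add_one (Finset.mem_erase.2 ⟨huv.ne.symm, hv⟩)
  omega

theorem leafSet_leafRotation_and_notMem (hT : IsMinLeafTree G T) (hS : IsSide T x y S) (huS : u ∈ S)
    (hu : u ∈ leafSet T) (hxu : G.Adj x u) :
    leafSet (leafRotation T x y u) = insert y ((leafSet T).erase u) ∧ y ∉ (leafSet T).erase u :=
  eq_insert_erase_of_card_le hu (hS.leafSet_leafRotation_subset huS hu)
    (hT.card_leafSet_le (exchange_le hT.le hxu)
      (hS.isTree_exchange hT.isTree hS.left_notMem huS))

theorem leafSet_leafRotation (hT : IsMinLeafTree G T) (hS : IsSide T x y S) (huS : u ∈ S)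
    (hu : u ∈ leafSet T) (hxu : G.Adj x u) :
    leafSet (leafRotation T x y u) = insert y ((leafSet T).erase u) :=
  (hT.leafSet_leafRotation_and_notMem hS huS hu hxu).1

theorem notMem_erase_leafSet (hT : IsMinLeafTree G T) (hS : IsSide T x y S) (huS : u ∈ S)
    (hu : u ∈ leafSet T) (hxu : G.Adj x u) : y ∉ (leafSet T).erase u :=
  (hT.leafSet_leafRotation_and_notMem hS huS hu hxu).2

theorem card_leafSet_leafRotation (hT : IsMinLeafTree G T) (hS : IsSide T x y S) (huS : u ∈ S)
    (hu : u ∈ leafSet T) (hxu : G.Adj x u) : #(leafSet (leafRotation T x y u)) = #(leafSet T) := by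
  rw [hT.leafSet_leafRotation hS huS hu hxu,
    Finset.card_insert_of_notMem (hT.notMem_erase_leafSet hS huS hu hxu),
    Finset.card_erase_add_one hu]

theorem isMinLeafTree_leafRotation (hT : IsMinLeafTree G T) (hS : IsSide T x y S) (huS : u ∈ S)
    (hu : u ∈ leafSet T) (hxu : G.Adj x u) : IsMinLeafTree G (leafRotation T x y u) :=
  hT.of_card_leafSet_le (exchange_le hT.le hxu) (hS.isTree_exchange hT.isTree hS.left_notMem huS)
    (hT.card_leafSet_leafRotation hS huS hu hxu).le

theorem mem_leafSet_leafRotation (hT : IsMinLeafTree G T) (hS : IsSide T x y S) (huS : u ∈ S)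
    (hu : u ∈ leafSet T) (hxu : G.Adj x u) : y ∈ leafSet (leafRotation T x y u) :=
  hT.leafSet_leafRotation hS huS hu hxu ▸ Finset.mem_insert_self _ _

theorem degree_le_two (hT : IsMinLeafTree G T) (hS : IsSide T x y S) (huS : u ∈ S)
    (hu : u ∈ leafSet T) (hxu : G.Adj x u) : T.degree y ≤ 2 := by
  have hy := mem_leafSet.1 (hT.mem_leafSet_leafRotation hS huS hu hxu)
  have hdeg := hS.degree_leafRotation huS y
  grind

theorem three_le_degree_leafRotation (hT : IsMinLeafTree G T) (hS : IsSide T x y S) (huS : u ∈ S)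
    (hu : u ∈ leafSet T) (hxu : G.Adj x u) (hv : 3 ≤ T.degree v) :
    3 ≤ (leafRotation T x y u).degree v := by
  have hy := hT.degree_le_two hS huS hu hxu
  have hdeg := hS.degree_leafRotation huS v
  grind

theorem not_adj_right (hT : IsMinLeafTree G T) (hcard : 3 ≤ #(leafSet T)) (hS : IsSide T x y S)
    (huS : u ∈ S) (hu : u ∈ leafSet T) (hxu : G.Adj x u) (hw : w ∈ leafSet T) (hwu : w ≠ u) :
    ¬ G.Adj y w := by
  refine (hT.isMinLeafTree_leafRotation hS huS hu hxu).not_adj_of_mem_leafSet ?_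
    (hT.mem_leafSet_leafRotation hS huS hu hxu) ?_
  · rwa [hT.card_leafSet_leafRotation hS huS hu hxu]
  · rw [hT.leafSet_leafRotation hS huS hu hxu]
    exact Finset.mem_insert_of_mem (Finset.mem_erase.2 ⟨hwu, hw⟩)

end IsMinLeafTree

section Distance

variable {T : SimpleGraph V} {x y z r u p : V} {S R : Set V}

theorem IsSide.dist_add_le_dist_exchange (hT : T.IsTree) (hS : IsSide T x y S)
    (hR : IsSide T x z R) (hyz : y ≠ z) (hrS : r ∉ S) (hrR : r ∉ R) (v : V) :
    T.dist r v + (if v ∈ S then 1 else 0) ≤ (exchange T x y z y).dist r v := by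
  have hz : z ∉ S := hR.notMem_of_ne hT.connected hS hyz.symm hR.right_mem
  have hy := hS.compl.dist_left hT.connected hrS
  have hz' := hR.compl.dist_left hT.connected hrR
  have key := le_add_dist_exchange (x := x) (y := y) (d := z) (c := y)
    (f := fun w => T.dist r w + if w ∈ S then 1 else 0)
    (hS.isTree_exchange hT hz hS.right_mem).connected (fun a b hab hne => ?_) ?_ ?_ r v
  · simpa only [dist_self, hrS, if_false, zero_add] using key
  · have := dist_le_dist_add_one_of_adj hab r
    simp only [hS.mem_iff_mem hab hne]
    omega
  all_goals simp only [hS.right_mem, hz, if_true, if_false]; omega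

theorem IsSide.dist_add_le_dist_leafRotation_leafRotation [Fintype V] (hT : T.IsTree)
    (hS : IsSide T x y S) (huS : u ∈ S) (hu : T.degree u = 1) (huy : u ≠ y) (hup : T.Adj u p)
    (hrS : r ∈ S) (hru : r ≠ u) {v : V} (hvu : v ≠ u) :
    T.dist r v + (if v ∈ S then 0 else 1) ≤
      (leafRotation (leafRotation T x y u) u p y).dist r v := by
  have hx := hS.dist_left hT.connected hrS
  have hux : u ≠ x := fun h => hS.left_notMem (h ▸ huS)
  have htree := (hS.diff_singleton_leafRotation huS hu huy hup).isTree_exchange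
    (hS.isTree_exchange hT hS.left_notMem huS) (fun h => h.2 rfl)
    ⟨hS.right_mem, huy.symm⟩
  -- In the new tree `u` subdivides the edge `xy`, so it takes over the distance of `x` and pushes
  -- everything beyond `x` one step away.
  have key := le_add_dist_exchange
    (f := fun w => if w = u then T.dist r x else T.dist r w + if w ∈ S then 0 else 1)
    htree.connected (fun a b hab hne => ?_) ?_ ?_ r v
  · simpa only [hvu, hru, dist_self, hrS, if_true, if_false, zero_add] using key
  · rcases exchange_adj.1 hab with ⟨h, hne'⟩ | ⟨h, -⟩
    · have hau : a ≠ u := by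
        rintro rfl
        exact hne (by rw [eq_of_adj_of_degree_eq_one hu h hup])
      have hbu : b ≠ u := by
        rintro rfl
        exact hne (by rw [eq_of_adj_of_degree_eq_one hu h.symm hup, Sym2.eq_swap])
      have := dist_le_dist_add_one_of_adj h r
      simp only [hau, hbu, hS.mem_iff_mem h hne', if_false]
      omega
    · rcases Sym2.eq_iff.1 h with ⟨rfl, rfl⟩ | ⟨rfl, rfl⟩ <;>
        simp only [hux.symm, hS.left_notMem, if_true, if_false] <;> omega
  all_goals simp only [huy.symm, hS.right_mem, if_true, if_false]; omega

end Distance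

namespace IsMinLeafTree

variable [Fintype V] {G T : SimpleGraph V} {x y z u v p : V} {S R : Set V}

theorem leafSet_exchange (hT : IsMinLeafTree G T) (hS : IsSide T x y S) (hR : IsSide T x z R)
    (hx : 3 ≤ T.degree x) (hz : z ∉ S) (hzy : G.Adj z y) :
    leafSet (exchange T x y z y) = leafSet T :=
  Finset.eq_of_subset_of_card_le (hS.leafSet_exchange_subset hR hx hz)
    (hT.card_leafSet_le (exchange_le hT.le hzy) (hS.isTree_exchange hT.isTree hz hS.right_mem))

theorem not_adj_left_of_mem_leafSet (hT : IsMinLeafTree G T) (hcard : 3 ≤ #(leafSet T))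
    (hS : IsSide T x y S) (huS : u ∈ S) (hu : u ∈ leafSet T) (hxu : G.Adj x u)
    (hv : v ∈ leafSet T) (hvu : v ≠ u) (hxv : G.Adj x v) (hR : IsSide T x z R) (hzy : z ≠ y) :
    ¬ G.Adj z y := by
  intro hadj
  have hyR := hS.notMem_of_ne hT.isTree.connected hR hzy.symm hS.right_mem
  refine (hT.isMinLeafTree_leafRotation hS huS hu hxu).not_adj_right
    (hT.card_leafSet_leafRotation hS huS hu hxu ▸ hcard)
    (hS.compl_leafRotation hT.isTree.connected huS hR hzy) hyR
    (hT.mem_leafSet_leafRotation hS huS hu hxu) hadj (w := v) ?_ ?_ hxv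
  · rw [hT.leafSet_leafRotation hS huS hu hxu]
    exact Finset.mem_insert_of_mem (Finset.mem_erase.2 ⟨hvu, hv⟩)
  · rintro rfl
    exact hT.notMem_erase_leafSet hS huS hu hxu (Finset.mem_erase.2 ⟨hvu, hv⟩)

theorem eq_of_adj_of_mem (hT : IsMinLeafTree G T) (hK : K14Free G) (hcard : 3 ≤ #(leafSet T))
    (hS : IsSide T x y S) (huS : u ∈ S) (hvS : v ∈ S) (hu : u ∈ leafSet T) (hv : v ∈ leafSet T)
    (hxu : G.Adj x u) (hxv : G.Adj x v) : u = v := by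
  by_contra huv
  have hx : 1 < T.degree x := by
    have hpos := hS.adj.degree_pos_left
    have hne : T.degree x ≠ 1 := fun h =>
      hT.not_adj_of_mem_leafSet hcard (mem_leafSet.2 h) hu hxu
    omega
  obtain ⟨w, W, hwy, hW⟩ := exists_isSide_ne hT.isTree.isAcyclic hx y
  have hnotMem {a : V} (ha : a ∈ S) : a ∉ W :=
    hS.notMem_of_ne hT.isTree.connected hW hwy.symm ha
  have hyu : y ≠ u := by
    rintro rfl
    exact hT.notMem_erase_leafSet hS hvS hv hxv (Finset.mem_erase.2 ⟨huv, hu⟩)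
  have hyv : y ≠ v := by
    rintro rfl
    exact hT.notMem_erase_leafSet hS huS hu hxu (Finset.mem_erase.2 ⟨Ne.symm huv, hv⟩)
  refine hK ⟨x, w, y, u, v, hwy, fun h => hnotMem huS (h ▸ hW.right_mem),
    fun h => hnotMem hvS (h ▸ hW.right_mem), hyu, hyv, huv, hT.le hW.adj, hT.le hS.adj, hxu, hxv,
    ?_, ?_, ?_, ?_, ?_, hT.not_adj_of_mem_leafSet hcard hu hv⟩
  · exact hT.not_adj_left_of_mem_leafSet hcard hS huS hu hxu hv (Ne.symm huv) hxv hW hwy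
  · exact fun h => hT.not_adj_right hcard hW.compl (hnotMem huS) hu h hv (Ne.symm huv) hxv
  · exact fun h => hT.not_adj_right hcard hW.compl (hnotMem hvS) hv h hu huv hxu
  · exact hT.not_adj_right hcard hS hvS hv hxv hu huv
  · exact hT.not_adj_right hcard hS huS hu hxu hv (Ne.symm huv)

theorem eq_of_sym2_eq (hT : IsMinLeafTree G T) (hK : K14Free G) (hcard : 3 ≤ #(leafSet T))
    {x' y' u' : V} (hS : IsSide T x y S) (huS : u ∈ S) (hu : u ∈ leafSet T) (hxu : G.Adj x u)
    (hR : IsSide T x' y' R) (huR : u' ∈ R) (hu' : u' ∈ leafSet T) (hxu' : G.Adj x' u')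
    (h : s(x, y) = s(x', y')) : u = u' ∧ x = x' := by
  rcases Sym2.eq_iff.1 h with ⟨rfl, rfl⟩ | ⟨rfl, rfl⟩
  · obtain rfl := hS.set_eq hT.isTree.connected hR
    exact ⟨hT.eq_of_adj_of_mem hK hcard hS huS huR hu hu' hxu hxu', rfl⟩
  · obtain rfl := hS.compl.set_eq hT.isTree.connected hR
    exact absurd hxu' (hT.not_adj_right hcard hS huS hu hxu hu' fun h => huR (h ▸ huS))

theorem isMinLeafTree_leafRotation_leafRotation (hT : IsMinLeafTree G T) (hS : IsSide T x y S)
    (huS : u ∈ S) (hu : u ∈ leafSet T) (hxu : G.Adj x u) (huy : u ≠ y) (hup : T.Adj u p)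
    (hyu : G.Adj y u) : IsMinLeafTree G (leafRotation (leafRotation T x y u) u p y) :=
  (hT.isMinLeafTree_leafRotation hS huS hu hxu).isMinLeafTree_leafRotation
    (hS.diff_singleton_leafRotation huS (mem_leafSet.1 hu) huy hup) ⟨hS.right_mem, huy.symm⟩
    (hT.mem_leafSet_leafRotation hS huS hu hxu) hyu.symm

theorem three_le_degree_leafRotation_leafRotation (hT : IsMinLeafTree G T) (hS : IsSide T x y S)
    (huS : u ∈ S) (hu : u ∈ leafSet T) (hxu : G.Adj x u) (huy : u ≠ y) (hup : T.Adj u p)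
    (hyu : G.Adj y u) (hv : 3 ≤ T.degree v) :
    3 ≤ (leafRotation (leafRotation T x y u) u p y).degree v :=
  (hT.isMinLeafTree_leafRotation hS huS hu hxu).three_le_degree_leafRotation
    (hS.diff_singleton_leafRotation huS (mem_leafSet.1 hu) huy hup) ⟨hS.right_mem, huy.symm⟩
    (hT.mem_leafSet_leafRotation hS huS hu hxu) hyu.symm
    (hT.three_le_degree_leafRotation hS huS hu hxu hv)

theorem leafSet_leafRotation_leafRotation (hT : IsMinLeafTree G T) (hS : IsSide T x y S)
    (huS : u ∈ S) (hu : u ∈ leafSet T) (hxu : G.Adj x u) (huy : u ≠ y) (hup : T.Adj u p)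
    (hyu : G.Adj y u) :
    leafSet (leafRotation (leafRotation T x y u) u p y) = insert p ((leafSet T).erase u) ∧
      p ∉ (leafSet T).erase u := by
  have h := (hT.isMinLeafTree_leafRotation hS huS hu hxu).leafSet_leafRotation_and_notMem
    (hS.diff_singleton_leafRotation huS (mem_leafSet.1 hu) huy hup) ⟨hS.right_mem, huy.symm⟩
    (hT.mem_leafSet_leafRotation hS huS hu hxu) hyu.symm
  rwa [hT.leafSet_leafRotation hS huS hu hxu,
    Finset.erase_insert (hT.notMem_erase_leafSet hS huS hu hxu)] at h

end IsMinLeafTree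

/-! ### Pushing the leaves away from a branch vertex -/

/-- The sum of the distances in `T` from `r` to the leaves of `T`. -/
noncomputable def leafDepth [Fintype V] (T : SimpleGraph V) (r : V) : ℕ :=
  ∑ v ∈ leafSet T, T.dist r v

/-- `T` is a spanning tree of `G` with the least number of leaves and has `r` as a branch vertex;
among all such trees, the leaves of `T` lie as far from `r` as possible. -/
structure IsDeepestTree [Fintype V] (G T : SimpleGraph V) (r : V) : Prop
    extends IsMinLeafTree G T where
  three_le_degree : 3 ≤ T.degree r
  leafDepth_le : ∀ ⦃T' : SimpleGraph V⦄, IsMinLeafTree G T' → 3 ≤ T'.degree r →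
    leafDepth T' r ≤ leafDepth T r

theorem IsMinLeafTree.exists_isDeepestTree [Fintype V] {G T : SimpleGraph V} {r : V}
    (hT : IsMinLeafTree G T) (hr : 3 ≤ T.degree r) : ∃ T', IsDeepestTree G T' r := by
  obtain ⟨T', ⟨hT', hr'⟩, hmax⟩ := Set.exists_max_image
    {T : SimpleGraph V | IsMinLeafTree G T ∧ 3 ≤ T.degree r} (leafDepth · r) (Set.toFinite _)
    ⟨T, hT, hr⟩
  exact ⟨T', hT', hr', fun T'' h₁ h₂ => hmax T'' ⟨h₁, h₂⟩⟩

namespace IsDeepestTree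

variable [Fintype V] {G T : SimpleGraph V} {r x y z u : V} {S R : Set V}

theorem three_le_card_leafSet (hT : IsDeepestTree G T r) : 3 ≤ #(leafSet T) :=
  _root_.three_le_card_leafSet hT.isTree hT.three_le_degree

theorem not_adj_of_isSide_isSide (hT : IsDeepestTree G T r) (hS : IsSide T x y S)
    (hR : IsSide T x z R) (hyz : y ≠ z) (hx : 3 ≤ T.degree x) (hrx : r ≠ x) (hrS : r ∉ S)
    (hrR : r ∉ R) : ¬ G.Adj z y := by
  intro hzy
  have hz : z ∉ S := hR.notMem_of_ne hT.isTree.connected hS hyz.symm hR.right_mem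
  have hleaf := hT.leafSet_exchange hS hR hx hz hzy
  have hmin : IsMinLeafTree G (exchange T x y z y) :=
    hT.of_card_leafSet_le (exchange_le hT.le hzy) (hS.isTree_exchange hT.isTree hz hS.right_mem)
      (congrArg card hleaf).le
  have hr : 3 ≤ (exchange T x y z y).degree r := by
    have := hS.degree_exchange hz hS.right_mem r
    have := hT.three_le_degree
    grind
  refine (hT.leafDepth_le hmin hr).not_gt ?_
  have hdist := hS.dist_add_le_dist_exchange hT.isTree hR hyz hrS hrR
  obtain ⟨w, hwS, hw⟩ := hS.exists_degree_eq_one hT.isTree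
  rw [leafDepth, leafDepth, hleaf]
  refine Finset.sum_lt_sum (fun v _ => le_of_add_le_left (hdist v)) ⟨w, mem_leafSet.2 hw, ?_⟩
  simpa only [hwS, if_true, Nat.add_one_le_iff] using hdist w

theorem not_adj_right_of_mem (hT : IsDeepestTree G T r) (hS : IsSide T x y S) (hrS : r ∈ S)
    (hx : 3 ≤ T.degree x) (huS : u ∈ S) (hu : u ∈ leafSet T) (hxu : G.Adj x u) (huy : u ≠ y) :
    ¬ G.Adj y u := by
  intro hyu
  have hr := hT.three_le_degree
  have hru : r ≠ u := fun h => by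
    have := mem_leafSet.1 (h ▸ hu)
    omega
  obtain ⟨p, hup⟩ := (T.degree_pos_iff_exists_adj u).1 (by rw [mem_leafSet.1 hu]; exact one_pos)
  have hpS : p ∈ S := by_contra fun hp => huy (hS.eq_of_adj huS hp hup).1
  obtain ⟨hleaf, hp⟩ := hT.leafSet_leafRotation_leafRotation hS huS hu hxu huy hup hyu
  refine (hT.leafDepth_le (hT.isMinLeafTree_leafRotation_leafRotation hS huS hu hxu huy hup hyu)
    (hT.three_le_degree_leafRotation_leafRotation hS huS hu hxu huy hup hyu hr)).not_gt ?_
  have hdist {v : V} (hv : v ≠ u) := hS.dist_add_le_dist_leafRotation_leafRotation hT.isTree huS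
    (mem_leafSet.1 hu) huy hup hrS hru hv
  have hgain : 2 ≤ ∑ v ∈ (leafSet T).erase u, if v ∈ S then 0 else 1 := by
    rw [Finset.sum_erase (f := fun v => if v ∈ S then 0 else 1) _ (if_pos huS)]
    simpa only [Finset.card_filter, ite_not] using hS.two_le_card_leafSet_notMem hT.isTree hx
  have hsum := Finset.sum_le_sum fun v hv => hdist (Finset.ne_of_mem_erase (s := leafSet T) hv)
  have hpdist := hdist hup.ne.symm
  have hpu := dist_le_dist_add_one_of_adj hup.symm r
  rw [Finset.sum_add_distrib] at hsum
  rw [if_pos hpS] at hpdist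
  rw [leafDepth, leafDepth, hleaf, Finset.sum_insert hp, ← Finset.add_sum_erase _ _ hu]
  omega

theorem degree_left_le_two (hT : IsDeepestTree G T r) (hK : K14Free G) (hS : IsSide T x y S)
    (hrS : r ∈ S) (huS : u ∈ S) (hu : u ∈ leafSet T) (hxu : G.Adj x u) : T.degree x ≤ 2 := by
  by_contra! hx
  obtain ⟨a, A, b, B, hA, hB, hay, hby, hab⟩ :=
    hS.exists_isSide_isSide_ne hT.isTree.isAcyclic hx
  have hconn := hT.isTree.connected
  have hnotMem {c v : V} {C : Set V} (hC : IsSide T x c C) (hcy : c ≠ y) (hv : v ∈ S) : v ∉ C :=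
    hS.notMem_of_ne hconn hC hcy.symm hv
  have huy : u ≠ y := by
    rintro rfl
    have := hS.eq_right_of_degree_eq_one hconn (mem_leafSet.1 hu) hrS ▸ hT.three_le_degree
    rw [mem_leafSet.1 hu] at this
    omega
  have hy {c : V} {C : Set V} (hC : IsSide T x c C) (hcy : c ≠ y) : ¬ G.Adj y c := by
    intro hyc
    have hx' := (hT.isMinLeafTree_leafRotation hS huS hu hxu).degree_le_two
      (hS.compl_leafRotation hconn huS hC hcy) (hnotMem hC hcy hS.right_mem)
      (hT.mem_leafSet_leafRotation hS huS hu hxu) hyc.symm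
    have := hS.degree_leafRotation huS x
    grind [hS.adj.ne, hxu.ne]
  have hu' {c : V} {C : Set V} (hC : IsSide T x c C) (hcy : c ≠ y) : ¬ G.Adj u c := fun huc =>
    hx.not_ge (hT.degree_le_two hC.compl (hnotMem hC hcy huS) hu huc.symm)
  exact hK ⟨x, y, u, a, b, huy.symm, hay.symm, hby.symm,
    fun h => hnotMem hA hay huS (h ▸ hA.right_mem), fun h => hnotMem hB hby huS (h ▸ hB.right_mem),
    hab, hT.le hS.adj, hxu, hT.le hA.adj, hT.le hB.adj,
    hT.not_adj_right_of_mem hS hrS hx huS hu hxu huy, hy hA hay, hy hB hby, hu' hA hay, hu' hB hby,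
    hT.not_adj_of_isSide_isSide hB hA hab.symm hx (fun h => hS.left_notMem (h ▸ hrS))
      (hnotMem hB hby hrS) (hnotMem hA hay hrS)⟩

end IsDeepestTree

/-- `z` is the endpoint farther from `r` of the first edge of the path of the tree `T` from `x` to
`u`. -/
def IsFarEnd (T : SimpleGraph V) (r x u z : V) : Prop :=
  ∃ y S p R, IsSide T x y S ∧ u ∈ S ∧ IsSide T z p R ∧ r ∈ R ∧ s(x, y) = s(z, p)

theorem exists_isFarEnd {T : SimpleGraph V} (hT : T.IsTree) (r : V) {x u : V} (hxu : x ≠ u) :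
    ∃ z, IsFarEnd T r x u z := by
  obtain ⟨y, S, hS, hu⟩ := exists_isSide_mem hT hxu
  by_cases hr : r ∈ S
  · exact ⟨x, y, S, y, S, hS, hu, hS, hr, rfl⟩
  · exact ⟨y, y, S, x, Sᶜ, hS, hu, hS.compl, hr, Sym2.eq_swap⟩

section FarEnd

variable [Fintype V] {G T : SimpleGraph V} {r x u z : V}

theorem IsDeepestTree.degree_le_two_of_isFarEnd (hT : IsDeepestTree G T r) (hK : K14Free G)
    (hu : u ∈ leafSet T) (hxu : G.Adj x u) (hz : IsFarEnd T r x u z) : T.degree z ≤ 2 := by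
  obtain ⟨y, S, p, R, hS, huS, hR, hrR, h⟩ := hz
  rcases Sym2.eq_iff.1 h with ⟨rfl, rfl⟩ | ⟨rfl, rfl⟩
  · obtain rfl := hS.set_eq hT.isTree.connected hR
    exact hT.degree_left_le_two hK hS hrR huS hu hxu
  · exact hT.degree_le_two hS huS hu hxu

theorem IsMinLeafTree.eq_of_isFarEnd (hT : IsMinLeafTree G T) (hK : K14Free G)
    (hcard : 3 ≤ #(leafSet T)) {x' u' : V} (hu : u ∈ leafSet T) (hxu : G.Adj x u)
    (hu' : u' ∈ leafSet T) (hxu' : G.Adj x' u') (hz : IsFarEnd T r x u z)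
    (hz' : IsFarEnd T r x' u' z) : u = u' ∧ x = x' := by
  obtain ⟨y, S, p, R, hS, huS, hR, hrR, h⟩ := hz
  obtain ⟨y', S', p', R', hS', huS', hR', hrR', h'⟩ := hz'
  obtain rfl := hR.right_eq hT.isTree.connected hR' hrR hrR'
  exact hT.eq_of_sym2_eq hK hcard hS huS hu hxu hS' huS' hu' hxu' (h.trans h'.symm)

theorem IsDeepestTree.sum_degree_leafSet_add_card_branchSet_le (hT : IsDeepestTree G T r)
    (hK : K14Free G) :
    ∑ u ∈ leafSet T, G.degree u + #(branchSet T) ≤ Fintype.card V := by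
  have hcount : #((leafSet T).sigma fun u => G.neighborFinset u) ≤ #(branchSet T)ᶜ := by
    refine Finset.card_le_card_of_forall_subsingleton (fun q z => IsFarEnd T r q.2 q.1 z) ?_ ?_
    · rintro ⟨u, x⟩ hq
      rw [Finset.mem_sigma, mem_neighborFinset] at hq
      obtain ⟨z, hz⟩ := exists_isFarEnd hT.isTree r hq.2.ne.symm
      refine ⟨z, ?_, hz⟩
      rw [Finset.mem_compl, mem_branchSet, not_le]
      exact Nat.lt_succ_of_le (hT.degree_le_two_of_isFarEnd hK hq.1 hq.2.symm hz)
    · rintro z - ⟨u, x⟩ ⟨hq, hz⟩ ⟨u', x'⟩ ⟨hq', hz'⟩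
      rw [Finset.mem_sigma, mem_neighborFinset] at hq hq'
      obtain ⟨rfl, rfl⟩ := hT.eq_of_isFarEnd hK hT.three_le_card_leafSet hq.1 hq.2.symm hq'.1
        hq'.2.symm hz hz'
      rfl
  simp only [Finset.card_sigma, card_neighborFinset_eq_degree] at hcount
  have := Finset.card_add_card_compl (branchSet T)
  omega

end FarEnd

namespace IsDeepestTree

variable [Fintype V] {G T : SimpleGraph V} {r : V}

theorem sum_degree_add_card_sdiff_add_card_branchSet_le (hT : IsDeepestTree G T r)
    (hK : K14Free G) {s : Finset V} (hs : s ⊆ leafSet T) :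
    ∑ v ∈ s, G.degree v + #(leafSet T \ s) + #(branchSet T) ≤ Fintype.card V := by
  have hpos : ∀ v ∈ leafSet T \ s, 1 ≤ G.degree v := fun v hv =>
    (mem_leafSet.1 (Finset.mem_sdiff.1 hv).1).ge.trans (degree_le_of_le hT.le)
  have hrest := Finset.card_nsmul_le_sum _ _ _ hpos
  rw [smul_eq_mul, mul_one] at hrest
  have hsplit := Finset.sum_sdiff (f := fun v => G.degree v) hs
  have htotal := hT.sum_degree_leafSet_add_card_branchSet_le hK
  omega

theorem card_leafSet_add_card_branchSet_le (hT : IsDeepestTree G T r) (hK : K14Free G) {k : ℕ}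
    (hσ : ∀ s : Finset V, IsIndepFinset G s → #s = k + 3 →
      Fintype.card V - k ≤ ∑ v ∈ s, G.degree v) :
    #(leafSet T) + #(branchSet T) ≤ 2 * k + 3 := by
  by_contra! hlarge
  have hr := hT.three_le_degree
  have : Nontrivial V := nontrivial_of_degree_ne_zero (by omega : T.degree r ≠ 0)
  have hbranch := card_branchSet_add_two_le hT.isTree
  obtain ⟨s, hs, hcard⟩ := Finset.exists_subset_card_eq (by omega : k + 3 ≤ #(leafSet T))
  have hindep : IsIndepFinset G s := fun u hu v hv _ =>
    hT.not_adj_of_mem_leafSet hT.three_le_card_leafSet (hs hu) (hs hv)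
  have hsum := hσ s hindep hcard
  have hbound := hT.sum_degree_add_card_sdiff_add_card_branchSet_le hK hs
  rw [Finset.card_sdiff_of_subset hs] at hbound
  omega

end IsDeepestTree

/-- If `G` is a connected `K_{1,4}`-free graph of order `n` with
`σ_{k+3}(G) ≥ n - k`, then `G` has a spanning tree with at most `2k+3` leaves and branch
vertices in total. -/
theorem stmt2 {V : Type*} [Fintype V] (k : ℕ)
    (G : SimpleGraph V) (hG : G.Connected) (hK : K14Free G)
    (hσ : ∀ s : Finset V, IsIndepFinset G s → s.card = k + 3 →
      Fintype.card V - k ≤ ∑ v ∈ s, G.degree v) :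
    ∃ T : SimpleGraph V, T ≤ G ∧ T.IsTree ∧
      (leafSet T).card + (branchSet T).card ≤ 2 * k + 3 := by
  obtain ⟨T₀, hT₀⟩ := exists_isMinLeafTree hG
  rcases (branchSet T₀).eq_empty_or_nonempty with hB | ⟨r, hr⟩
  · have := card_leafSet_le_two hT₀.isTree hB
    exact ⟨T₀, hT₀.le, hT₀.isTree, by rw [hB, Finset.card_empty]; omega⟩
  · obtain ⟨T, hT⟩ := hT₀.exists_isDeepestTree (mem_branchSet.1 hr)
    exact ⟨T, hT.le, hT.isTree, hT.card_leafSet_add_card_branchSet_le hK hσ⟩
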